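/- Let M ≥ N ≥ 1, let μ^{N,M} = (μ_1^{N,M} ≤ … ≤ μ_N^{N,M}) be the ordered eigenvalues of a matrix from LUE(N,M), and let λ^N = (λ_1^N ≤ … ≤ λ_N^N) be the ordered eigenvalues of a matrix from GUE(N). Then the random vector ((μ_i^{N,M} − M)/√M)_{1≤i≤N} converges in distribution, as M → ∞, to (λ_i^N)_{1≤i≤N}. -/

import Mathlib

open MeasureTheory ProbabilityTheory Filter Topology Matrix
open scoped NNReal BigOperators

noncomputable section

instance {m n α : Type*} [MeasurableSpace α] : MeasurableSpace (Matrix m n α) :=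
  inferInstanceAs (MeasurableSpace (m → n → α))

/-- The law of the Gaussian Unitary Ensemble `GUE(N)`. -/
def gueMeasure (N : ℕ) : Measure (Matrix (Fin N) (Fin N) ℂ) :=
  Measure.map
    (fun g : Fin N × Fin N → ℝ × ℝ => Matrix.of fun i j =>
      if i = j then ((g (i, i)).1 : ℂ)
      else if i < j then (((g (i, j)).1 : ℂ) + ((g (i, j)).2 : ℂ) * Complex.I) / (Real.sqrt 2 : ℂ)
      else (((g (j, i)).1 : ℂ) - ((g (j, i)).2 : ℂ) * Complex.I) / (Real.sqrt 2 : ℂ))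
    (Measure.pi fun _ => (gaussianReal 0 1).prod (gaussianReal 0 1))

/-- The law of the Laguerre Unitary Ensemble `LUE(N, M)`, i.e. the law of `A Aᴴ` for `A` an
`N × M` matrix with i.i.d. standard complex Gaussian entries. -/
def lueMeasure (N M : ℕ) : Measure (Matrix (Fin N) (Fin N) ℂ) :=
  Measure.map
    (fun g : Fin N × Fin M → ℝ × ℝ =>
      (Matrix.of fun i j => (((g (i, j)).1 : ℂ) + ((g (i, j)).2 : ℂ) * Complex.I) / (Real.sqrt 2 : ℂ)) *
      (Matrix.of fun i j => (((g (i, j)).1 : ℂ) + ((g (i, j)).2 : ℂ) * Complex.I) / (Real.sqrt 2 : ℂ))ᴴ)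
    (Measure.pi fun _ => (gaussianReal 0 1).prod (gaussianReal 0 1))

/-- The eigenvalues of a Hermitian matrix, sorted in nondecreasing order (junk value `0`
if the matrix is not Hermitian). -/
def sortedEigs {N : ℕ} (A : Matrix (Fin N) (Fin N) ℂ) : Fin N → ℝ :=
  if h : A.IsHermitian then h.eigenvalues ∘ Tuple.sort h.eigenvalues else 0

/-!
The ordered eigenvalues depend continuously on a Hermitian matrix, so by the continuous mapping
theorem it suffices that `(A Aᴴ - M) / √M` converges in law to `GUE(N)`, and by Lévy's theorem this
can be tested on the functions `H ↦ exp (i tr (S H))` with `S` Hermitian. If `a_k` are the columns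
of `A`, then `tr (S A Aᴴ) - M tr S` is the sum over `k` of the i.i.d. variables `a_k* S a_k - tr S`.
Unitary invariance of the Gaussian law diagonalizes `S`: if `τ_i` are its eigenvalues, these
variables have the law of `∑ τ_i (|z_i|² - 1)` with `z_i` independent standard complex Gaussians.
As `|z_i|² - 1` is centred with variance `1`, the one-dimensional central limit theorem gives the
limit `exp (-∑ τ_i² / 2) = exp (-‖S‖² / 2)` in the Frobenius norm, which is the value at `S` of the
characteristic function of `GUE(N)`.
-/

lemma sum_sq_eigenvalues {n : Type*} [Fintype n] [DecidableEq n] {A : Matrix n n ℂ}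
    (hA : A.IsHermitian) : ∑ i, hA.eigenvalues i ^ 2 = ∑ i, ∑ j, ‖A i j‖ ^ 2 := by
  have hentries : (A * Aᴴ).trace = ((∑ i, ∑ j, ‖A i j‖ ^ 2 : ℝ) : ℂ) := by
    simp [trace, mul_apply, Complex.mul_conj, Complex.normSq_eq_norm_sq]
  have hspectral : (A * Aᴴ).trace = ((∑ i, hA.eigenvalues i ^ 2 : ℝ) : ℂ) := by
    rw [hA.eq]
    conv_lhs => rw [hA.spectral_theorem]
    rw [← map_mul, Unitary.conjStarAlgAut_apply, trace_mul_comm, ← mul_assoc]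
    simp [trace, sq]
  exact_mod_cast hspectral.symm.trans hentries

section SortedEigenvalues

variable {N : ℕ} {A : Matrix (Fin N) (Fin N) ℂ}

lemma sortedEigs_of_isHermitian (hA : A.IsHermitian) :
    sortedEigs A = hA.eigenvalues ∘ Tuple.sort hA.eigenvalues :=
  dif_pos hA

lemma monotone_sortedEigs (A : Matrix (Fin N) (Fin N) ℂ) : Monotone (sortedEigs A) := by
  by_cases hA : A.IsHermitian
  · rw [sortedEigs_of_isHermitian hA]
    exact Tuple.monotone_sort _
  · simp only [sortedEigs, dif_neg hA]
    exact monotone_const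

lemma charpoly_eq_prod_X_sub_C_sortedEigs (hA : A.IsHermitian) :
    A.charpoly = ∏ i, (Polynomial.X - Polynomial.C (sortedEigs A i : ℂ)) := by
  rw [hA.charpoly_eq, sortedEigs_of_isHermitian hA]
  exact (Equiv.prod_comp (Tuple.sort hA.eigenvalues)
    fun i ↦ Polynomial.X - Polynomial.C (hA.eigenvalues i : ℂ)).symm

lemma det_scalar_sub_eq_prod_sortedEigs (hA : A.IsHermitian) (x : ℂ) :
    (scalar (Fin N) x - A).det = ∏ i, (x - sortedEigs A i) := by
  rw [← eval_charpoly, charpoly_eq_prod_X_sub_C_sortedEigs hA, Polynomial.eval_prod]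
  simp

lemma eq_of_monotone_of_prod_sub_eq {v w : Fin N → ℝ} (hv : Monotone v) (hw : Monotone w)
    (h : ∀ x : ℂ, ∏ i, (x - v i) = ∏ i, (x - w i)) : v = w := by
  have hpoly : ∏ i, (Polynomial.X - Polynomial.C (v i : ℂ)) =
      ∏ i, (Polynomial.X - Polynomial.C (w i : ℂ)) :=
    Polynomial.funext fun x ↦ by simpa [Polynomial.eval_prod] using h x
  have hroots : Finset.univ.val.map v = Finset.univ.val.map w := by
    have := congrArg (fun p : Polynomial ℂ ↦ p.roots.map Complex.re) hpoly
    simpa [Polynomial.roots_prod, Finset.prod_ne_zero_iff, Polynomial.X_sub_C_ne_zero,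
      Multiset.map_map, Function.comp_def] using this
  have hperm : (List.ofFn v).Perm (List.ofFn w) := by
    rw [← Multiset.coe_eq_coe]
    simpa [Fin.univ_val_map] using hroots
  exact List.ofFn_injective <| hperm.eq_of_pairwise (le := (· ≤ ·)) (fun _ _ _ _ ↦ le_antisymm)
    hv.sortedLE_ofFn.pairwise hw.sortedLE_ofFn.pairwise

lemma sortedEigs_eq_of_det_scalar_sub (hA : A.IsHermitian) {v : Fin N → ℝ} (hv : Monotone v)
    (h : ∀ x : ℂ, (scalar (Fin N) x - A).det = ∏ i, (x - v i)) : sortedEigs A = v :=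
  eq_of_monotone_of_prod_sub_eq (monotone_sortedEigs A) hv fun x ↦ by
    rw [← det_scalar_sub_eq_prod_sortedEigs hA, h]

lemma sortedEigs_smul_sub_scalar (hA : A.IsHermitian) {c : ℝ} (hc : 0 < c) (m : ℝ) :
    sortedEigs (c • (A - scalar (Fin N) (m : ℂ))) = fun i ↦ c * (sortedEigs A i - m) := by
  have hHerm : (c • (A - scalar (Fin N) (m : ℂ))).IsHermitian :=
    (hA.sub (isHermitian_diagonal_of_self_adjoint _ (by ext; simp))).smul
      (IsSelfAdjoint.all c)
  have hc' : (c : ℂ) ≠ 0 := mod_cast hc.ne'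
  refine sortedEigs_eq_of_det_scalar_sub hHerm (fun i j hij ↦ ?_) fun x ↦ ?_
  · have := monotone_sortedEigs A hij
    gcongr
  · have hfactor : scalar (Fin N) x - c • (A - scalar (Fin N) (m : ℂ)) =
        (c : ℂ) • (scalar (Fin N) (c⁻¹ * x + m) - A) := by
      ext i j
      by_cases hij : i = j
      · subst hij
        simp only [scalar_apply, Matrix.sub_apply, diagonal_apply_eq, Matrix.smul_apply,
          Complex.real_smul, Complex.ofReal_inv, smul_eq_mul]
        field_simp
        ring
      · simp [hij]
    rw [hfactor, det_smul, det_scalar_sub_eq_prod_sortedEigs hA, Fintype.card_fin,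
      ← Fin.prod_const, ← Finset.prod_mul_distrib]
    refine Finset.prod_congr rfl fun i _ ↦ ?_
    push_cast
    field_simp
    ring

lemma sum_sq_sortedEigs (hA : A.IsHermitian) :
    ∑ i, sortedEigs A i ^ 2 = ∑ i, ∑ j, ‖A i j‖ ^ 2 := by
  rw [← sum_sq_eigenvalues hA, sortedEigs_of_isHermitian hA]
  exact Equiv.sum_comp (Tuple.sort hA.eigenvalues) fun i ↦ hA.eigenvalues i ^ 2

lemma exists_isCompact_eventually_sortedEigs_mem (A : Matrix (Fin N) (Fin N) ℂ) :
    ∃ K : Set (Fin N → ℝ), IsCompact K ∧ ∀ᶠ B in 𝓝[{A | A.IsHermitian}] A, sortedEigs B ∈ K := by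
  have hF : Continuous fun B : Matrix (Fin N) (Fin N) ℂ ↦ ∑ i, ∑ j, ‖B i j‖ ^ 2 := by fun_prop
  set R := ∑ i, ∑ j, ‖A i j‖ ^ 2 + 1
  refine ⟨Set.Icc (fun _ ↦ -√R) fun _ ↦ √R, isCompact_Icc, ?_⟩
  have hR : ∀ᶠ B in 𝓝[{A | A.IsHermitian}] A, ∑ i, ∑ j, ‖B i j‖ ^ 2 < R :=
    (hF.tendsto A).mono_left nhdsWithin_le_nhds |>.eventually_lt_const (lt_add_one _)
  filter_upwards [hR, self_mem_nhdsWithin] with B hBR hB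
  have habs (i : Fin N) : |sortedEigs B i| ≤ √R := Real.abs_le_sqrt <|
    calc sortedEigs B i ^ 2 ≤ ∑ j, sortedEigs B j ^ 2 :=
          Finset.single_le_sum (fun j _ ↦ sq_nonneg (sortedEigs B j)) (Finset.mem_univ i)
      _ = ∑ i, ∑ j, ‖B i j‖ ^ 2 := sum_sq_sortedEigs hB
      _ ≤ R := hBR.le
  exact ⟨fun i ↦ (abs_le.1 (habs i)).1, fun i ↦ (abs_le.1 (habs i)).2⟩

lemma continuousOn_sortedEigs :
    ContinuousOn sortedEigs {A : Matrix (Fin N) (Fin N) ℂ | A.IsHermitian} := by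
  intro A hA
  obtain ⟨K, hK, hmem⟩ := exists_isCompact_eventually_sortedEigs_mem A
  refine hK.tendsto_nhds_of_unique_mapClusterPt hmem fun v _ hv ↦ ?_
  obtain ⟨U, hU, hUv⟩ := mapClusterPt_iff_ultrafilter.1 hv
  have hUA : Tendsto id (U : Filter (Matrix (Fin N) (Fin N) ℂ)) (𝓝 A) :=
    hU.trans nhdsWithin_le_nhds
  have hmono : Monotone v := fun i j hij ↦
    le_of_tendsto_of_tendsto' (tendsto_pi_nhds.1 hUv i) (tendsto_pi_nhds.1 hUv j)
      fun B ↦ monotone_sortedEigs B hij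
  refine (sortedEigs_eq_of_det_scalar_sub hA hmono fun x ↦ ?_).symm
  have hdet : Tendsto (fun B ↦ (scalar (Fin N) x - B).det) U (𝓝 (scalar (Fin N) x - A).det) :=
    ((continuous_const.sub continuous_id).matrix_det.tendsto A).comp hUA
  have hprod : Tendsto (fun B ↦ ∏ i, (x - (sortedEigs B i : ℂ))) U (𝓝 (∏ i, (x - v i))) :=
    tendsto_finsetProd _ fun i _ ↦ tendsto_const_nhds.sub
      ((Complex.continuous_ofReal.tendsto _).comp (tendsto_pi_nhds.1 hUv i))
  refine tendsto_nhds_unique hdet (hprod.congr' ?_)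
  filter_upwards [hU self_mem_nhdsWithin] with B hB
  exact (det_scalar_sub_eq_prod_sortedEigs hB x).symm

end SortedEigenvalues

instance {m n : Type*} [Countable m] [Countable n] : BorelSpace (Matrix m n ℂ) :=
  inferInstanceAs (BorelSpace (m → n → ℂ))

lemma isClosed_setOf_isHermitian {n : Type*} : IsClosed {A : Matrix n n ℂ | A.IsHermitian} :=
  isClosed_eq continuous_id.matrix_conjTranspose continuous_id

lemma measurable_sortedEigs {N : ℕ} : Measurable (sortedEigs (N := N)) := by
  classical
  have hpiecewise : Set.piecewise {A : Matrix (Fin N) (Fin N) ℂ | A.IsHermitian} sortedEigs 0 =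
      sortedEigs := by
    ext A i
    by_cases hA : A.IsHermitian <;> simp [Set.piecewise, sortedEigs, hA]
  rw [← hpiecewise]
  exact continuousOn_sortedEigs.measurable_piecewise continuousOn_const
    isClosed_setOf_isHermitian.measurableSet

lemma coe_realPart_of_isHermitian {n : Type*} {A : Matrix n n ℂ} (hA : A.IsHermitian) :
    (realPart A : Matrix n n ℂ) = A :=
  IsSelfAdjoint.coe_realPart hA

lemma continuous_coe_realPart {n : Type*} :
    Continuous fun A : Matrix n n ℂ ↦ (realPart A : Matrix n n ℂ) := by
  simp only [realPart_apply_coe, star_eq_conjTranspose]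
  fun_prop

section ConvergenceInDistribution

variable {ι Ω' : Type*} {Ω : ι → Type*} {mΩ : ∀ i, MeasurableSpace (Ω i)}
  {μ : ∀ i, Measure (Ω i)} [∀ i, IsProbabilityMeasure (μ i)]
  {mΩ' : MeasurableSpace Ω'} {μ' : Measure Ω'} [IsProbabilityMeasure μ'] {l : Filter ι}

lemma tendsto_integral_comp_of_tendstoInDistribution {E : Type*} [TopologicalSpace E]
    [MeasurableSpace E] [OpensMeasurableSpace E] {X : ∀ i, Ω i → E} {Z : Ω' → E}
    (h : TendstoInDistribution X l Z μ μ') (f : BoundedContinuousFunction E ℝ) :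
    Tendsto (fun i ↦ ∫ ω, f (X i ω) ∂μ i) l (𝓝 (∫ ω, f (Z ω) ∂μ')) := by
  have hf {ν : Measure E} : AEStronglyMeasurable f ν :=
    f.continuous.measurable.aestronglyMeasurable
  have := ProbabilityMeasure.tendsto_iff_forall_integral_tendsto.1 h.tendsto f
  simpa only [ProbabilityMeasure.coe_mk, integral_map (h.forall_aemeasurable _) hf,
    integral_map h.aemeasurable_limit hf] using this

lemma tendstoInDistribution_sortedEigs {N : ℕ} {X : ∀ i, Ω i → Matrix (Fin N) (Fin N) ℂ}
    {Z : Ω' → Matrix (Fin N) (Fin N) ℂ} (hX : ∀ i ω, (X i ω).IsHermitian)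
    (hZ : ∀ ω, (Z ω).IsHermitian) (h : TendstoInDistribution X l Z μ μ') :
    TendstoInDistribution (fun i ω ↦ sortedEigs (X i ω)) l (fun ω ↦ sortedEigs (Z ω)) μ μ' := by
  have hcont : Continuous fun A : Matrix (Fin N) (Fin N) ℂ ↦
      sortedEigs (realPart A : Matrix (Fin N) (Fin N) ℂ) :=
    continuousOn_sortedEigs.comp_continuous continuous_coe_realPart fun A ↦ (realPart A).2
  simpa only [Function.comp_def, coe_realPart_of_isHermitian (hX _ _),
    coe_realPart_of_isHermitian (hZ _)] using h.continuous_comp hcont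

end ConvergenceInDistribution

section Levy

variable {n Ω' : Type*} [Fintype n] {Ω : ℕ → Type*} {mΩ : ∀ i, MeasurableSpace (Ω i)}
  {μ : ∀ i, Measure (Ω i)} [∀ i, IsProbabilityMeasure (μ i)]
  {mΩ' : MeasurableSpace Ω'} {μ' : Measure Ω'} [IsProbabilityMeasure μ']

/-- The vectorization of square matrices, with values in the Euclidean space whose norm is the
Frobenius norm. -/
def euclideanVec : Matrix n n ℂ ≃ₜ EuclideanSpace ℂ (n × n) where
  toFun A := WithLp.toLp 2 (vec A)
  invFun v := of fun i j ↦ v (j, i)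
  left_inv _ := rfl
  right_inv _ := rfl
  continuous_toFun := (PiLp.continuous_toLp 2 _).comp <|
    continuous_pi fun p ↦ continuous_id.matrix_elem p.2 p.1
  continuous_invFun := continuous_matrix fun i j ↦
    (continuous_apply (j, i)).comp (PiLp.continuous_ofLp 2 _)

omit [Fintype n] in
lemma euclideanVec_apply (A : Matrix n n ℂ) (p : n × n) : euclideanVec A p = A p.2 p.1 :=
  rfl

lemma inner_euclideanVec_eq_trace_realPart_mul {A : Matrix n n ℂ} (hA : A.IsHermitian)
    (T : Matrix n n ℂ) :
    (inner ℝ (euclideanVec A) (euclideanVec T) : ℂ) =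
      ((realPart T : Matrix n n ℂ) * A).trace := by
  have hinner : inner ℝ (euclideanVec A) (euclideanVec T) = (T * A).trace.re := by
    rw [trace_mul_comm, ← congrArg (· * T) hA.eq, ← star_vec_dotProduct_vec]
    simp [euclideanVec_apply, PiLp.inner_apply, dotProduct, Complex.inner, mul_comm]
  have hconj : (Tᴴ * A).trace = star (T * A).trace := by
    rw [← trace_conjTranspose, conjTranspose_mul, hA.eq, trace_mul_comm]
  rw [hinner, realPart_apply_coe, star_eq_conjTranspose, smul_mul, add_mul, trace_smul, trace_add,
    hconj, Complex.re_eq_add_conj]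
  simp [div_eq_inv_mul, Complex.real_smul, mul_add]

lemma charFun_map_euclideanVec {Ω : Type*} {mΩ : MeasurableSpace Ω} {μ : Measure Ω}
    {X : Ω → Matrix n n ℂ} (hX : AEMeasurable X μ) (hXH : ∀ ω, (X ω).IsHermitian)
    (T : Matrix n n ℂ) :
    charFun (μ.map (euclideanVec ∘ X)) (euclideanVec T) =
      ∫ ω, Complex.exp (((realPart T : Matrix n n ℂ) * X ω).trace * Complex.I) ∂μ := by
  rw [charFun_apply, integral_map (euclideanVec.continuous.measurable.comp_aemeasurable hX)
    (by fun_prop)]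
  simp_rw [Function.comp_apply, inner_euclideanVec_eq_trace_realPart_mul (hXH _)]

lemma tendstoInDistribution_of_tendsto_integral_cexp_trace {X : ∀ i, Ω i → Matrix n n ℂ}
    {Z : Ω' → Matrix n n ℂ} (hX : ∀ i, AEMeasurable (X i) (μ i)) (hZ : AEMeasurable Z μ')
    (hXH : ∀ i ω, (X i ω).IsHermitian) (hZH : ∀ ω, (Z ω).IsHermitian)
    (h : ∀ S : Matrix n n ℂ, S.IsHermitian →
      Tendsto (fun i ↦ ∫ ω, Complex.exp ((S * X i ω).trace * Complex.I) ∂μ i) atTop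
        (𝓝 (∫ ω, Complex.exp ((S * Z ω).trace * Complex.I) ∂μ'))) :
    TendstoInDistribution X atTop Z μ μ' := by
  have hvec : TendstoInDistribution (fun i ↦ euclideanVec ∘ X i) atTop (euclideanVec ∘ Z) μ μ' :=
    { forall_aemeasurable i := euclideanVec.continuous.measurable.comp_aemeasurable (hX i)
      aemeasurable_limit := euclideanVec.continuous.measurable.comp_aemeasurable hZ
      tendsto := ProbabilityMeasure.tendsto_iff_tendsto_charFun.2 fun v ↦ by
        obtain ⟨T, rfl⟩ := euclideanVec.surjective v
        simpa only [ProbabilityMeasure.coe_mk, charFun_map_euclideanVec (hX _) (hXH _),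
          charFun_map_euclideanVec hZ hZH] using h (realPart T) (realPart T).2 }
  simpa only [Function.comp_def, Homeomorph.symm_apply_apply]
    using hvec.continuous_comp euclideanVec.symm.continuous

end Levy

section GaussianMoments

lemma integrable_pow_gaussianReal (n : ℕ) : Integrable (fun x : ℝ ↦ x ^ n) (gaussianReal 0 1) :=
  (memLp_id_gaussianReal' (n : ℕ) (ENNReal.natCast_ne_top n)).integrable_norm_pow'.mono'
    (by fun_prop) (.of_forall fun x ↦ by simp)

lemma hasDerivAt_gaussianPDFReal (x : ℝ) :
    HasDerivAt (gaussianPDFReal 0 1) (-x * gaussianPDFReal 0 1 x) x := by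
  have h : HasDerivAt (fun y : ℝ ↦ -(y - 0) ^ 2 / (2 * (1 : ℝ≥0))) (-x) x := by
    convert! (((hasDerivAt_id x).sub_const 0).pow 2).neg.div_const (2 * ((1 : ℝ≥0) : ℝ)) using 1
    simp only [Nat.cast_ofNat, id_eq, sub_zero, Nat.add_one_sub_one, pow_one, mul_one,
      NNReal.coe_one]
    ring
  convert! h.exp.const_mul ((√(2 * Real.pi * (1 : ℝ≥0)))⁻¹) using 1
  rw [gaussianPDFReal]
  ring

-- Integration by parts against the density `φ`, which satisfies `φ' = -x φ`.
lemma integral_pow_add_two_gaussianReal (n : ℕ) :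
    ∫ x, x ^ (n + 2) ∂gaussianReal 0 1 = (n + 1) * ∫ x, x ^ n ∂gaussianReal 0 1 := by
  have hint (k : ℕ) : Integrable fun x ↦ x ^ k * gaussianPDFReal 0 1 x := by
    have := integrable_pow_gaussianReal k
    rw [gaussianReal_of_var_ne_zero _ one_ne_zero, gaussianPDF_def,
      integrable_withDensity_iff (by fun_prop) (by simp)] at this
    simpa [gaussianPDFReal_nonneg] using this
  have hparts := integral_mul_deriv_eq_deriv_mul_of_integrable
    (u := fun x : ℝ ↦ x ^ (n + 1)) (u' := fun x ↦ (n + 1) * x ^ n)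
    (v := gaussianPDFReal 0 1) (v' := fun x ↦ -x * gaussianPDFReal 0 1 x)
    (fun x _ ↦ by simpa using hasDerivAt_pow (n + 1) x) (fun x _ ↦ hasDerivAt_gaussianPDFReal x)
    ((hint (n + 2)).neg.congr (.of_forall fun x ↦ by
      simp only [Pi.neg_apply, Pi.mul_apply]; ring))
    (((hint n).const_mul (n + 1)).congr (.of_forall fun x ↦ by simp only [Pi.mul_apply]; ring))
    (hint (n + 1))
  simp only [integral_gaussianReal_eq_integral_smul one_ne_zero, smul_eq_mul]
  calc ∫ x, gaussianPDFReal 0 1 x * x ^ (n + 2)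
      = -∫ x, x ^ (n + 1) * (-x * gaussianPDFReal 0 1 x) := by
        rw [← integral_neg]; congr with x; ring
    _ = ∫ x, (n + 1) * x ^ n * gaussianPDFReal 0 1 x := by rw [hparts, neg_neg]
    _ = (n + 1) * ∫ x, gaussianPDFReal 0 1 x * x ^ n := by
        rw [← integral_const_mul]; congr with x; ring

lemma memLp_sq_gaussianReal : MemLp (fun x : ℝ ↦ x ^ 2) 2 (gaussianReal 0 1) := by
  rw [memLp_two_iff_integrable_sq (by fun_prop)]
  simpa only [← pow_mul] using integrable_pow_gaussianReal 4

lemma integral_sq_gaussianReal : ∫ x, x ^ 2 ∂gaussianReal 0 1 = 1 := by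
  simpa using integral_pow_add_two_gaussianReal 0

lemma variance_sq_gaussianReal : Var[fun x ↦ x ^ 2; gaussianReal 0 1] = 2 := by
  have hfour : ∫ x, x ^ 4 ∂gaussianReal 0 1 = 3 := by
    rw [integral_pow_add_two_gaussianReal 2, integral_sq_gaussianReal]
    norm_num
  rw [variance_eq_sub memLp_sq_gaussianReal, integral_sq_gaussianReal]
  simp only [Pi.pow_apply, ← pow_mul, hfour]
  norm_num

/-- The law of a pair of independent standard real Gaussians, which are thought of as the real and
imaginary parts of a complex Gaussian of variance `2`. -/
abbrev gaussianPair : Measure (ℝ × ℝ) := (gaussianReal 0 1).prod (gaussianReal 0 1)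

/-- The squared modulus `|x + iy|² / 2`, centred at its mean under `gaussianPair`. -/
def sqModFluctuation (z : ℝ × ℝ) : ℝ := (z.1 ^ 2 + z.2 ^ 2) / 2 - 1

lemma measurable_sqModFluctuation : Measurable sqModFluctuation := by
  unfold sqModFluctuation
  fun_prop

lemma integral_sqModFluctuation : ∫ z, sqModFluctuation z ∂gaussianPair = 0 := by
  have hsq := memLp_sq_gaussianReal.integrable one_le_two
  have hadd : Integrable (fun z : ℝ × ℝ ↦ z.1 ^ 2 + z.2 ^ 2) gaussianPair :=
    (hsq.comp_fst _).add (hsq.comp_snd _)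
  simp only [sqModFluctuation]
  rw [integral_sub (hadd.div_const 2) (integrable_const 1), integral_div,
    integral_add (hsq.comp_fst _) (hsq.comp_snd _), integral_fun_fst (fun x : ℝ ↦ x ^ 2),
    integral_fun_snd (fun y : ℝ ↦ y ^ 2)]
  norm_num [integral_sq_gaussianReal]

lemma integral_sq_sqModFluctuation : ∫ z, sqModFluctuation z ^ 2 ∂gaussianPair = 1 := by
  rw [← variance_of_integral_eq_zero measurable_sqModFluctuation.aemeasurable
    integral_sqModFluctuation]
  unfold sqModFluctuation
  rw [variance_sub_const (by fun_prop)]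
  simp only [div_eq_inv_mul]
  rw [variance_const_mul, variance_add_prod memLp_sq_gaussianReal memLp_sq_gaussianReal,
    variance_sq_gaussianReal]
  norm_num

end GaussianMoments

section ComplexGaussianVectors

variable {ι : Type*} [Fintype ι]

/-- The complex vector with prescribed real and imaginary parts. It sends independent pairs of
standard real Gaussians to the standard Gaussian of the real inner product space `ℂ^ι`, so its
coordinates have variance `2` and not `1`. -/
def complexVec (g : ι → ℝ × ℝ) : EuclideanSpace ℂ ι :=
  WithLp.toLp 2 fun i ↦ (g i).1 + (g i).2 * Complex.I

lemma inner_complexVec (g : ι → ℝ × ℝ) (v : EuclideanSpace ℂ ι) :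
    inner ℝ (complexVec g) v = ∑ i, ((g i).1 * (v i).re + (g i).2 * (v i).im) := by
  simp [complexVec, PiLp.inner_apply, Complex.inner, mul_comm]

omit [Fintype ι] in
@[fun_prop]
lemma measurable_complexVec : Measurable (complexVec (ι := ι)) := by
  unfold complexVec
  fun_prop

lemma integral_cexp_gaussianPair (a b : ℝ) :
    ∫ z : ℝ × ℝ, Complex.exp (((z.1 * a + z.2 * b : ℝ) : ℂ) * Complex.I)
      ∂gaussianPair = Complex.exp (-(a ^ 2 + b ^ 2) / 2) := by
  have hone (c : ℝ) : ∫ x, Complex.exp ((x * c : ℝ) * Complex.I) ∂gaussianReal 0 1 =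
      Complex.exp (-c ^ 2 / 2) := by
    simpa [charFun_apply_real, mul_comm, neg_div] using charFun_gaussianReal (μ := 0) (v := 1) c
  simp only [Complex.ofReal_add, add_mul, Complex.exp_add]
  rw [integral_prod_mul (fun x : ℝ ↦ Complex.exp ((x * a : ℝ) * Complex.I))
    (fun y : ℝ ↦ Complex.exp ((y * b : ℝ) * Complex.I)), hone, hone, ← Complex.exp_add]
  ring_nf

lemma map_complexVec_pi_gaussianPair :
    (Measure.pi fun _ : ι ↦ gaussianPair).map complexVec =
      stdGaussian (EuclideanSpace ℂ ι) := by
  have := Measure.isProbabilityMeasure_map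
    (μ := Measure.pi fun _ : ι ↦ gaussianPair)
    measurable_complexVec.aemeasurable
  refine Measure.ext_of_charFun (funext fun v ↦ ?_)
  rw [charFun_apply, integral_map measurable_complexVec.aemeasurable (by fun_prop),
    charFun_stdGaussian]
  simp only [inner_complexVec, Complex.ofReal_sum, Finset.sum_mul, Complex.exp_sum]
  rw [integral_fintype_prod_eq_prod fun (i : ι) (z : ℝ × ℝ) ↦
    Complex.exp (((z.1 * (v i).re + z.2 * (v i).im : ℝ) : ℂ) * Complex.I)]
  simp_rw [integral_cexp_gaussianPair, ← Complex.exp_sum]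
  have hnorm : ‖v‖ ^ 2 = ∑ i, ((v i).re ^ 2 + (v i).im ^ 2) := by
    simp only [EuclideanSpace.norm_sq_eq, ← Complex.normSq_eq_norm_sq, Complex.normSq_apply,
      ← pow_two]
  rw [← Complex.ofReal_pow, hnorm]
  push_cast
  rw [← Finset.sum_div, Finset.sum_neg_distrib]

lemma map_repr_comp_complexVec (b : OrthonormalBasis ι ℂ (EuclideanSpace ℂ ι)) :
    (Measure.pi fun _ : ι ↦ gaussianPair).map (b.repr ∘ complexVec) =
      (Measure.pi fun _ : ι ↦ gaussianPair).map complexVec := by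
  rw [← Measure.map_map b.repr.continuous.measurable measurable_complexVec,
    map_complexVec_pi_gaussianPair]
  exact stdGaussian_map
    { b.repr.toLinearEquiv.restrictScalars ℝ with norm_map' := b.repr.norm_map }

end ComplexGaussianVectors

section Columns

variable {ι κ E : Type*} [Fintype ι] [Fintype κ] [MeasurableSpace E] {ν : Measure E}
  [IsProbabilityMeasure ν]

lemma map_columns_pi :
    (Measure.pi fun _ : ι × κ ↦ ν).map (fun g k i ↦ g (i, k)) =
      Measure.pi fun _ : κ ↦ Measure.pi fun _ : ι ↦ ν := by
  have huncurry : (Measure.pi fun _ : κ ↦ Measure.pi fun _ : ι ↦ ν).map (fun h p ↦ h p.2 p.1) =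
      Measure.pi fun _ : ι × κ ↦ ν := by
    refine (Measure.pi_eq fun s hs ↦ ?_).symm
    have hpre : (fun (h : κ → ι → E) (p : ι × κ) ↦ h p.2 p.1) ⁻¹' Set.univ.pi s =
        Set.univ.pi fun k ↦ Set.univ.pi fun i ↦ s (i, k) := by
      ext h
      simpa using forall_comm
    rw [Measure.map_apply (by fun_prop) (.univ_pi hs), hpre]
    simp_rw [Measure.pi_pi, Fintype.prod_prod_type_right]
  rw [← huncurry, Measure.map_map (by fun_prop) (by fun_prop)]
  exact Measure.map_id

lemma integral_prod_columns {f : (ι → E) → ℂ} (hf : Measurable f) :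
    ∫ g, ∏ k : κ, f (fun i ↦ g (i, k)) ∂Measure.pi (fun _ : ι × κ ↦ ν) =
      (∫ z, f z ∂Measure.pi fun _ : ι ↦ ν) ^ Fintype.card κ := by
  have hcolumns : Measurable fun (g : ι × κ → E) k i ↦ g (i, k) := by fun_prop
  have hprod : Measurable fun h : κ → ι → E ↦ ∏ k, f (h k) := by fun_prop
  rw [← integral_fintype_prod_eq_pow f, ← map_columns_pi,
    integral_map hcolumns.aemeasurable hprod.aestronglyMeasurable]

end Columns

section QuadraticForm

variable {n : Type*} [Fintype n] [DecidableEq n] {S : Matrix n n ℂ}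

lemma star_dotProduct_mulVec_eq_sum_eigenvalues_mul (hS : S.IsHermitian)
    (v : EuclideanSpace ℂ n) :
    star v.ofLp ⬝ᵥ S *ᵥ v.ofLp =
      ∑ i, (hS.eigenvalues i * ‖hS.eigenvectorBasis.repr v i‖ ^ 2 : ℂ) := by
  have hinner (i : n) : inner ℂ (hS.eigenvectorBasis i) (WithLp.toLp 2 (S *ᵥ v.ofLp)) =
      hS.eigenvalues i * hS.eigenvectorBasis.repr v i := by
    rw [OrthonormalBasis.repr_apply_apply, EuclideanSpace.inner_eq_star_dotProduct,
      EuclideanSpace.inner_eq_star_dotProduct, dotProduct_comm, dotProduct_mulVec,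
      ← congrArg (star _ ᵥ* ·) hS.eq, ← star_mulVec, hS.mulVec_eigenvectorBasis, star_smul,
      smul_dotProduct, dotProduct_comm]
    simp
  rw [dotProduct_comm, ← EuclideanSpace.inner_toLp_toLp, ← hS.eigenvectorBasis.sum_inner_mul_inner]
  refine Finset.sum_congr rfl fun i _ ↦ ?_
  rw [hinner, ← Complex.conj_mul', OrthonormalBasis.repr_apply_apply, inner_conj_symm]
  ring

/-- The deviation of the quadratic form `a* S a` from its mean `tr S`, where `a = complexVec g / √2`
is a standard complex Gaussian vector when `g` has independent coordinates of law
`gaussianPair`. -/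
def quadraticFluctuation (S : Matrix n n ℂ) (g : n → ℝ × ℝ) : ℂ :=
  star (complexVec g).ofLp ⬝ᵥ S *ᵥ (complexVec g).ofLp / 2 - S.trace

omit [DecidableEq n] in
lemma measurable_quadraticFluctuation (S : Matrix n n ℂ) :
    Measurable (quadraticFluctuation S) := by
  unfold quadraticFluctuation
  simp only [dotProduct, mulVec, Pi.star_apply]
  fun_prop

lemma integral_cexp_quadraticFluctuation (hS : S.IsHermitian) (s : ℝ) :
    ∫ g, Complex.exp (s * quadraticFluctuation S g * Complex.I)
        ∂Measure.pi (fun _ : n ↦ gaussianPair) =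
      ∏ i, charFun (gaussianPair.map sqModFluctuation) (s * hS.eigenvalues i) := by
  let F (w : EuclideanSpace ℂ n) : ℂ :=
    Complex.exp (s * ((∑ i, (hS.eigenvalues i * ‖w i‖ ^ 2 : ℂ)) / 2 - S.trace) * Complex.I)
  have hF : Measurable F := by fun_prop
  have hrepr : Measurable hS.eigenvectorBasis.repr :=
    hS.eigenvectorBasis.repr.continuous.measurable
  have hF_complexVec (g : n → ℝ × ℝ) : F (complexVec g) =
      ∏ i, Complex.exp ((s * hS.eigenvalues i : ℝ) * sqModFluctuation (g i) * Complex.I) := by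
    simp only [F, ← Complex.exp_sum, ← Finset.sum_mul]
    congr 2
    rw [show S.trace = ∑ i, (hS.eigenvalues i : ℂ) from hS.trace_eq_sum_eigenvalues,
      Finset.sum_div, ← Finset.sum_sub_distrib, Finset.mul_sum]
    refine Finset.sum_congr rfl fun i _ ↦ ?_
    rw [← Complex.ofReal_pow, ← Complex.normSq_eq_norm_sq, complexVec, Complex.normSq_add_mul_I,
      sqModFluctuation]
    push_cast
    ring
  calc ∫ g, Complex.exp (s * quadraticFluctuation S g * Complex.I)
          ∂Measure.pi (fun _ : n ↦ gaussianPair)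
      = ∫ v, F v
          ∂(Measure.pi fun _ : n ↦ gaussianPair).map (hS.eigenvectorBasis.repr ∘ complexVec) := by
        simp_rw [quadraticFluctuation, star_dotProduct_mulVec_eq_sum_eigenvalues_mul hS]
        exact (integral_map (hrepr.comp measurable_complexVec).aemeasurable
          hF.aestronglyMeasurable).symm
    _ = ∫ g, ∏ i, Complex.exp ((s * hS.eigenvalues i : ℝ) * sqModFluctuation (g i) * Complex.I)
          ∂Measure.pi (fun _ : n ↦ gaussianPair) := by
        rw [map_repr_comp_complexVec, integral_map measurable_complexVec.aemeasurable
          hF.aestronglyMeasurable]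
        simp_rw [hF_complexVec]
    _ = _ := by
        rw [integral_fintype_prod_eq_prod fun (i : n) z ↦
          Complex.exp ((s * hS.eigenvalues i : ℝ) * sqModFluctuation z * Complex.I)]
        refine Finset.prod_congr rfl fun i _ ↦ ?_
        rw [charFun_apply_real,
          integral_map measurable_sqModFluctuation.aemeasurable
            (Measurable.aestronglyMeasurable (by fun_prop))]

omit [DecidableEq n] in
lemma tendsto_integral_cexp_quadraticFluctuation_pow (hS : S.IsHermitian) :
    Tendsto (fun M : ℕ ↦ (∫ g, Complex.exp (((√M)⁻¹ : ℝ) * quadraticFluctuation S g * Complex.I)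
        ∂Measure.pi (fun _ : n ↦ gaussianPair)) ^ M) atTop
      (𝓝 (Complex.exp (-((∑ i, ∑ j, ‖S i j‖ ^ 2 : ℝ) : ℂ) / 2))) := by
  classical
  simp_rw [integral_cexp_quadraticFluctuation hS, ← Finset.prod_pow]
  rw [← sum_sq_eigenvalues hS, Complex.ofReal_sum, ← Finset.sum_neg_distrib, Finset.sum_div,
    Complex.exp_sum]
  simp_rw [Complex.ofReal_pow]
  exact tendsto_finsetProd _ fun i _ ↦ tendsto_charFun_inv_sqrt_mul_pow
    measurable_sqModFluctuation.aemeasurable integral_sqModFluctuation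
    integral_sq_sqModFluctuation (hS.eigenvalues i)

end QuadraticForm

section Wishart

variable {N M : ℕ}

/-- The `N × M` matrix whose entries `(x + iy) / √2` are standard complex Gaussians when the pairs
`(x, y)` are independent of law `gaussianPair`. -/
def ginibreMatrix (g : Fin N × Fin M → ℝ × ℝ) : Matrix (Fin N) (Fin M) ℂ :=
  of fun i j ↦ ((g (i, j)).1 + (g (i, j)).2 * Complex.I) / (√2 : ℂ)

lemma continuous_ginibreMatrix : Continuous (ginibreMatrix (N := N) (M := M)) := by
  refine continuous_matrix fun i j ↦ ?_
  simp only [ginibreMatrix, of_apply]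
  fun_prop

lemma continuous_ginibreMatrix_mul_conjTranspose :
    Continuous fun g : Fin N × Fin M → ℝ × ℝ ↦ ginibreMatrix g * (ginibreMatrix g)ᴴ :=
  continuous_ginibreMatrix.matrix_mul continuous_ginibreMatrix.matrix_conjTranspose

/-- The Wishart matrix `A Aᴴ` of an `N × M` matrix `A`, centred and rescaled to the size of its
fluctuations as `M → ∞`. -/
def normalizedWishart (g : Fin N × Fin M → ℝ × ℝ) : Matrix (Fin N) (Fin N) ℂ :=
  (√M)⁻¹ • (ginibreMatrix g * (ginibreMatrix g)ᴴ - scalar (Fin N) ((M : ℝ) : ℂ))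

lemma isHermitian_normalizedWishart (g : Fin N × Fin M → ℝ × ℝ) :
    (normalizedWishart g).IsHermitian := by
  refine ((isHermitian_mul_conjTranspose_self _).sub ?_).smul (IsSelfAdjoint.all _)
  simp [IsHermitian]

lemma measurable_normalizedWishart : Measurable (normalizedWishart (N := N) (M := M)) := by
  have hcont := continuous_ginibreMatrix_mul_conjTranspose (N := N) (M := M)
  unfold normalizedWishart
  exact Continuous.measurable (by fun_prop)

lemma trace_mul_normalizedWishart (S : Matrix (Fin N) (Fin N) ℂ) (g : Fin N × Fin M → ℝ × ℝ) :
    (S * normalizedWishart g).trace =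
      ((√M)⁻¹ : ℝ) * ∑ k, quadraticFluctuation S fun i ↦ g (i, k) := by
  have hgram : (S * (ginibreMatrix g * (ginibreMatrix g)ᴴ)).trace =
      ∑ k, star (complexVec fun i ↦ g (i, k)).ofLp ⬝ᵥ
        S *ᵥ (complexVec fun i ↦ g (i, k)).ofLp / 2 := by
    have hsqrt : (√2 : ℂ) * √2 = 2 := mod_cast Real.mul_self_sqrt zero_le_two
    rw [← Matrix.mul_assoc, trace_mul_comm]
    simp only [trace, diag_apply, mul_apply, conjTranspose_apply, ginibreMatrix, of_apply,
      dotProduct, mulVec, complexVec, Pi.star_apply, star_div₀, Finset.mul_sum, Finset.sum_div]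
    refine Finset.sum_congr rfl fun k _ ↦ Finset.sum_congr rfl fun i _ ↦
      Finset.sum_congr rfl fun j _ ↦ ?_
    rw [Complex.star_def, Complex.conj_ofReal, ← hsqrt]
    ring
  have hscalar : (S * scalar (Fin N) ((M : ℝ) : ℂ)).trace = M * S.trace := by
    rw [scalar_apply, ← smul_one_eq_diagonal, mul_smul_comm, mul_one, trace_smul, smul_eq_mul,
      Complex.ofReal_natCast]
  rw [normalizedWishart, mul_smul_comm, trace_smul, mul_sub, trace_sub, hgram, hscalar]
  simp only [quadraticFluctuation, Finset.sum_sub_distrib, Finset.sum_const, Finset.card_univ,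
    Fintype.card_fin, nsmul_eq_mul, Complex.real_smul]

lemma integral_cexp_trace_mul_normalizedWishart (S : Matrix (Fin N) (Fin N) ℂ) :
    ∫ g, Complex.exp ((S * normalizedWishart g).trace * Complex.I)
        ∂Measure.pi (fun _ : Fin N × Fin M ↦ gaussianPair) =
      (∫ g, Complex.exp (((√M)⁻¹ : ℝ) * quadraticFluctuation S g * Complex.I)
        ∂Measure.pi (fun _ : Fin N ↦ gaussianPair)) ^ M := by
  have hmeas := measurable_quadraticFluctuation S
  simp_rw [trace_mul_normalizedWishart, Finset.mul_sum, Finset.sum_mul, Complex.exp_sum]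
  rw [integral_prod_columns (κ := Fin M)
    (f := fun z ↦ Complex.exp (((√M)⁻¹ : ℝ) * quadraticFluctuation S z * Complex.I))
    (by fun_prop), Fintype.card_fin]

lemma integral_lueMeasure {F : Matrix (Fin N) (Fin N) ℂ → ℝ} (hF : Measurable F) :
    ∫ A, F A ∂lueMeasure N M =
      ∫ g, F (ginibreMatrix g * (ginibreMatrix g)ᴴ)
        ∂Measure.pi fun _ : Fin N × Fin M ↦ gaussianPair :=
  integral_map continuous_ginibreMatrix_mul_conjTranspose.measurable.aemeasurable
    hF.aestronglyMeasurable

end Wishart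

section GUE

variable {N : ℕ}

/-- The Hermitian matrix with law `gueMeasure N` when the pairs `g p` are independent of law
`gaussianPair`; the pairs strictly below the diagonal are not used. -/
def gueMatrix (g : Fin N × Fin N → ℝ × ℝ) : Matrix (Fin N) (Fin N) ℂ :=
  of fun i j ↦
    if i = j then ((g (i, i)).1 : ℂ)
    else if i < j then ((g (i, j)).1 + (g (i, j)).2 * Complex.I) / (√2 : ℂ)
    else ((g (j, i)).1 - (g (j, i)).2 * Complex.I) / (√2 : ℂ)

lemma isHermitian_gueMatrix (g : Fin N × Fin N → ℝ × ℝ) : (gueMatrix g).IsHermitian := by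
  refine IsHermitian.ext fun i j ↦ ?_
  simp only [gueMatrix, of_apply]
  rcases lt_trichotomy i j with h | rfl | h
  · simp [h, h.ne, h.ne', h.not_gt, sub_eq_add_neg]
  · simp
  · simp [h, h.ne, h.ne', h.not_gt, sub_eq_add_neg]

lemma measurable_gueMatrix : Measurable (gueMatrix (N := N)) := by
  refine Continuous.measurable (continuous_matrix fun i j ↦ ?_)
  simp only [gueMatrix, of_apply]
  split_ifs <;> fun_prop

lemma integral_gueMeasure {F : Matrix (Fin N) (Fin N) ℂ → ℝ} (hF : Measurable F) :
    ∫ A, F A ∂gueMeasure N =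
      ∫ g, F (gueMatrix g) ∂Measure.pi fun _ : Fin N × Fin N ↦ gaussianPair :=
  integral_map measurable_gueMatrix.aemeasurable hF.aestronglyMeasurable

/-- The vector of upper triangular entries representing the linear form `H ↦ tr (S H)` in the
independent Gaussian coordinates of `gueMatrix`. -/
def upperTriangularCoeff (S : Matrix (Fin N) (Fin N) ℂ) : EuclideanSpace ℂ (Fin N × Fin N) :=
  WithLp.toLp 2 fun p ↦
    if p.1 = p.2 then S p.1 p.2 else if p.1 < p.2 then √2 * S p.1 p.2 else 0

lemma sum_sum_eq_sum_upperTriangular {R : Type*} [AddCommMonoid R] (f : Fin N → Fin N → R) :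
    ∑ i, ∑ j, f i j =
      ∑ i, ∑ j, if i = j then f i j else if i < j then f i j + f j i else 0 := by
  have hlower : ∑ i, ∑ j, (if j < i then f i j else 0) = ∑ i, ∑ j, if i < j then f j i else 0 :=
    Finset.sum_comm
  have hsplit (i j : Fin N) : f i j =
      (if i = j then f i j else if i < j then f i j else 0) + if j < i then f i j else 0 := by
    rcases lt_trichotomy i j with h | rfl | h
    · simp [h, h.ne, h.not_gt]
    · simp
    · simp [h, h.ne', h.not_gt]
  rw [Finset.sum_congr rfl fun i _ ↦ Finset.sum_congr rfl fun j _ ↦ hsplit i j]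
  simp only [Finset.sum_add_distrib]
  rw [hlower]
  simp only [← Finset.sum_add_distrib]
  refine Finset.sum_congr rfl fun i _ ↦ Finset.sum_congr rfl fun j _ ↦ ?_
  split_ifs with hij hlt
  · exact absurd hlt hij.not_lt
  all_goals simp

lemma norm_sq_upperTriangularCoeff {S : Matrix (Fin N) (Fin N) ℂ} (hS : S.IsHermitian) :
    ‖upperTriangularCoeff S‖ ^ 2 = ∑ i, ∑ j, ‖S i j‖ ^ 2 := by
  rw [sum_sum_eq_sum_upperTriangular, EuclideanSpace.norm_sq_eq, Fintype.sum_prod_type]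
  refine Finset.sum_congr rfl fun i _ ↦ Finset.sum_congr rfl fun j _ ↦ ?_
  simp only [upperTriangularCoeff]
  split_ifs
  · rfl
  · rw [← hS.apply j i, norm_star, norm_mul, mul_pow, Complex.norm_real, Real.norm_eq_abs, sq_abs,
      Real.sq_sqrt zero_le_two, two_mul]
  · simp

lemma inner_complexVec_upperTriangularCoeff {S : Matrix (Fin N) (Fin N) ℂ} (hS : S.IsHermitian)
    (g : Fin N × Fin N → ℝ × ℝ) :
    (inner ℝ (complexVec g) (upperTriangularCoeff S) : ℂ) = (S * gueMatrix g).trace := by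
  have hdiv (z : ℂ) : z / √2 = √2 * z / 2 := by
    have hsqrt : (√2 : ℂ) * √2 = 2 := mod_cast Real.mul_self_sqrt zero_le_two
    rw [← hsqrt]
    field_simp
  simp only [trace, diag_apply, mul_apply]
  rw [sum_sum_eq_sum_upperTriangular, inner_complexVec, Fintype.sum_prod_type]
  push_cast
  refine Finset.sum_congr rfl fun i _ ↦ Finset.sum_congr rfl fun j _ ↦ ?_
  simp only [upperTriangularCoeff, gueMatrix, of_apply]
  rcases lt_trichotomy i j with h | rfl | h
  · have hij : S i j = (S i j).re + (S i j).im * Complex.I := (Complex.re_add_im _).symm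
    have hji : S j i = (S i j).re - (S i j).im * Complex.I := by
      rw [← hS.apply j i]
      apply Complex.ext <;> simp
    simp only [h, h.ne, h.ne', h.not_gt, if_true, if_false, Complex.re_ofReal_mul,
      Complex.im_ofReal_mul, Complex.ofReal_mul, hdiv]
    linear_combination (-(√2 * ((g (i, j)).1 - (g (i, j)).2 * Complex.I) / 2)) * hij -
      √2 * ((g (i, j)).1 + (g (i, j)).2 * Complex.I) / 2 * hji +
      √2 * (g (i, j)).2 * (S i j).im * Complex.I_sq
  · have hii : S i i = (S i i).re := (hS.coe_re_apply_self i).symm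
    rw [hii]
    simp [mul_comm]
  · simp [h.ne', h.not_gt]

lemma integral_cexp_trace_mul_gueMatrix {S : Matrix (Fin N) (Fin N) ℂ} (hS : S.IsHermitian) :
    ∫ g, Complex.exp ((S * gueMatrix g).trace * Complex.I)
        ∂Measure.pi (fun _ : Fin N × Fin N ↦ gaussianPair) =
      Complex.exp (-((∑ i, ∑ j, ‖S i j‖ ^ 2 : ℝ) : ℂ) / 2) := by
  simp_rw [← inner_complexVec_upperTriangularCoeff hS]
  rw [← norm_sq_upperTriangularCoeff hS, Complex.ofReal_pow, ← charFun_stdGaussian,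
    ← map_complexVec_pi_gaussianPair, charFun_apply,
    integral_map measurable_complexVec.aemeasurable (by fun_prop)]

lemma tendstoInDistribution_normalizedWishart (N : ℕ) :
    TendstoInDistribution (fun M : ℕ ↦ normalizedWishart (N := N) (M := M)) atTop gueMatrix
      (fun _ ↦ Measure.pi fun _ ↦ gaussianPair) (Measure.pi fun _ ↦ gaussianPair) := by
  refine tendstoInDistribution_of_tendsto_integral_cexp_trace
    (fun _ ↦ measurable_normalizedWishart.aemeasurable) measurable_gueMatrix.aemeasurable
    (fun _ ↦ isHermitian_normalizedWishart) isHermitian_gueMatrix fun S hS ↦ ?_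
  rw [integral_cexp_trace_mul_gueMatrix hS]
  simpa only [integral_cexp_trace_mul_normalizedWishart]
    using tendsto_integral_cexp_quadraticFluctuation_pow hS

end GUE

/-- **CLT for the eigenvalue vector.** If `μ₁ ≤ … ≤ μ_N` are the ordered eigenvalues of
`LUE(N,M)` and `λ₁ ≤ … ≤ λ_N` those of `GUE(N)`, then `((μ_i - M)/√M)_{1≤i≤N}` converges in
distribution to `(λ_i)_{1≤i≤N}` as `M → ∞`. -/
theorem lue_eigenvalues_clt_to_gue (N : ℕ) (hN : 1 ≤ N)
    (f : BoundedContinuousFunction (Fin N → ℝ) ℝ) :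
    Tendsto
      (fun M : ℕ =>
        ∫ A, f (fun i => (sortedEigs A i - M) / Real.sqrt M) ∂(lueMeasure N M))
      atTop (𝓝 (∫ A, f (sortedEigs A) ∂(gueMeasure N))) := by
  have hlaw := tendstoInDistribution_sortedEigs (fun _ ↦ isHermitian_normalizedWishart)
    isHermitian_gueMatrix (tendstoInDistribution_normalizedWishart N)
  have hf : Measurable fun A : Matrix (Fin N) (Fin N) ℂ ↦ f (sortedEigs A) :=
    f.continuous.measurable.comp measurable_sortedEigs
  rw [integral_gueMeasure hf]
  refine (tendsto_integral_comp_of_tendstoInDistribution hlaw f).congr' ?_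
  filter_upwards [eventually_gt_atTop 0] with M hM
  have hmeas : Measurable fun A : Matrix (Fin N) (Fin N) ℂ ↦
      f fun i ↦ (sortedEigs A i - M) / √M :=
    f.continuous.measurable.comp <| measurable_pi_lambda _ fun i ↦
      (((measurable_pi_apply i).comp measurable_sortedEigs).sub_const _).div_const _
  rw [integral_lueMeasure hmeas]
  simp_rw [normalizedWishart, sortedEigs_smul_sub_scalar (isHermitian_mul_conjTranspose_self _)
    (inv_pos.2 (Real.sqrt_pos.2 (Nat.cast_pos.2 hM))), div_eq_inv_mul]

end
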